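/- For any contact angle γ ∈ (π/2, π] and any A > 0, C > 0, the dimensionless total force F has at most two zeros on [0, π]: the set {φ ∈ [0, π] : F(φ) = 0} has at most two elements. -/

import Mathlib

/-!
Write `F` for the force. On `[0, π - γ]` the derivative `F'` is strictly increasing, on
`(π - γ, π / 2)` it is positive, and on `[π / 2, π]` it is strictly decreasing. If `F` took the same
value at three points `x < y < z`, Rolle's theorem would give zeros `p < q` of `F'` between them,
necessarily with `p ≤ π - γ` and `π / 2 ≤ q`. Then `F` decreases on `[0, p]` and on `[q, π]`, so
`F π ≤ F z = F x ≤ F 0`, whereas `F π - F 0 = 4 sin γ + π C² > 0`.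
-/

open Set Real

theorem exists_orderEmbedding_fin_of_le_encard {α : Type*} [LinearOrder α] {s : Set α} {n : ℕ}
    (h : n ≤ s.encard) : ∃ f : Fin n ↪o α, ∀ i, f i ∈ s := by
  obtain ⟨t, hts, htn⟩ := exists_subset_encard_eq h
  lift t to Finset α using finite_of_encard_eq_coe htn
  have hcard : t.card = n := by rwa [encard_coe_eq_coe_finsetCard, Nat.cast_inj] at htn
  exact ⟨t.orderEmbOfFin hcard, fun i => hts (t.orderEmbOfFin_mem hcard i)⟩

theorem le_and_le_of_strictMonoOn_of_strictAntiOn_of_eq {α β : Type*} [LinearOrder α] [Preorder β]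
    {g : α → β} {o a b c p q : α} {w : β} (hmono : StrictMonoOn g (Icc o a))
    (hne : ∀ x ∈ Ioo a b, g x ≠ w) (hanti : StrictAntiOn g (Icc b c))
    (hop : o ≤ p) (hpq : p < q) (hqc : q ≤ c) (hp : g p = w) (hq : g q = w) :
    p ≤ a ∧ b ≤ q := by
  constructor
  · by_contra! hap
    have hbp : b ≤ p := not_lt.mp fun hpb => hne p ⟨hap, hpb⟩ hp
    have := hanti ⟨hbp, hpq.le.trans hqc⟩ ⟨hbp.trans hpq.le, hqc⟩ hpq
    exact this.ne (hq.trans hp.symm)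
  · by_contra! hqb
    have hqa : q ≤ a := not_lt.mp fun haq => hne q ⟨haq, hqb⟩ hq
    have := hmono ⟨hop, hpq.le.trans hqa⟩ ⟨hop.trans hpq.le, hqa⟩ hpq
    exact this.ne (hp.trans hq.symm)

section Derivative

variable {f f' : ℝ → ℝ} {o a b c : ℝ}

theorem exists_mem_Ioo_hasDerivAt_eq_zero_of_ordConnected {s : Set ℝ} (hs : s.OrdConnected)
    (hf : ∀ x ∈ s, HasDerivAt f (f' x) x) {x y : ℝ} (hx : x ∈ s) (hy : y ∈ s) (hxy : x < y)
    (heq : f x = f y) : ∃ p ∈ Ioo x y, f' p = 0 :=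
  have hsub : Icc x y ⊆ s := hs.out hx hy
  exists_hasDerivAt_eq_zero hxy (HasDerivAt.continuousOn fun t ht => hf t (hsub ht)) heq
    fun t ht => hf t (hsub (Ioo_subset_Icc_self ht))

theorem antitoneOn_Icc_of_hasDerivAt_nonpos
    (hf : ∀ x ∈ Icc a b, HasDerivAt f (f' x) x) (hf' : ∀ x ∈ Ioo a b, f' x ≤ 0) :
    AntitoneOn f (Icc a b) := by
  rw [← interior_Icc] at hf'
  exact antitoneOn_of_hasDerivWithinAt_nonpos (convex_Icc a b) (HasDerivAt.continuousOn hf)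
    (fun x hx => (hf x (interior_subset hx)).hasDerivWithinAt) hf'

theorem right_le_left_of_three_eq (hf : ∀ x ∈ Icc o c, HasDerivAt f (f' x) x)
    (hmono : StrictMonoOn f' (Icc o a)) (hne : ∀ x ∈ Ioo a b, f' x ≠ 0)
    (hanti : StrictAntiOn f' (Icc b c)) {x y z : ℝ} (hx : x ∈ Icc o c) (hy : y ∈ Icc o c)
    (hz : z ∈ Icc o c) (hxy : x < y) (hyz : y < z) (hfxy : f x = f y) (hfyz : f y = f z) :
    f c ≤ f o := by
  obtain ⟨p, ⟨hxp, hpy⟩, hp⟩ :=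
    exists_mem_Ioo_hasDerivAt_eq_zero_of_ordConnected ordConnected_Icc hf hx hy hxy hfxy
  obtain ⟨q, ⟨hyq, hqz⟩, hq⟩ :=
    exists_mem_Ioo_hasDerivAt_eq_zero_of_ordConnected ordConnected_Icc hf hy hz hyz hfyz
  have hop : o ≤ p := hx.1.trans hxp.le
  have hqc : q ≤ c := hqz.le.trans hz.2
  obtain ⟨hpa, hbq⟩ : p ≤ a ∧ b ≤ q :=
    le_and_le_of_strictMonoOn_of_strictAntiOn_of_eq hmono hne hanti hop (hpy.trans hyq) hqc hp hq
  have anti_left : AntitoneOn f (Icc o p) :=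
    antitoneOn_Icc_of_hasDerivAt_nonpos
      (fun t ht => hf t ⟨ht.1, ht.2.trans (hpy.le.trans hy.2)⟩)
      fun t ht => hp ▸ (hmono ⟨ht.1.le, ht.2.le.trans hpa⟩ ⟨hop, hpa⟩ ht.2).le
  have anti_right : AntitoneOn f (Icc q c) :=
    antitoneOn_Icc_of_hasDerivAt_nonpos
      (fun t ht => hf t ⟨(hy.1.trans hyq.le).trans ht.1, ht.2⟩)
      fun t ht => hq ▸ (hanti ⟨hbq, hqc⟩ ⟨hbq.trans ht.1.le, ht.2.le⟩ ht.1).le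
  calc f c ≤ f z := anti_right ⟨hqz.le, hz.2⟩ ⟨hqc, le_rfl⟩ hz.2
    _ = f x := (hfxy.trans hfyz).symm
    _ ≤ f o := anti_left ⟨le_rfl, hop⟩ ⟨hx.1, hxp.le⟩ hx.1

theorem encard_fiber_le_two_of_hasDerivAt (hf : ∀ x ∈ Icc o c, HasDerivAt f (f' x) x)
    (hmono : StrictMonoOn f' (Icc o a)) (hne : ∀ x ∈ Ioo a b, f' x ≠ 0)
    (hanti : StrictAntiOn f' (Icc b c)) (hoc : f o < f c) (v : ℝ) :
    {x ∈ Icc o c | f x = v}.encard ≤ 2 := by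
  by_contra! hcard
  obtain ⟨e, he⟩ := exists_orderEmbedding_fin_of_le_encard (n := 3) (Order.add_one_le_of_lt hcard)
  have heq (i j : Fin 3) : f (e i) = f (e j) := (he i).2.trans (he j).2.symm
  exact hoc.not_ge <| right_le_left_of_three_eq hf hmono hne hanti (he 0).1 (he 1).1 (he 2).1
    (e.strictMono (by decide)) (e.strictMono (by decide)) (heq 0 1) (heq 1 2)

end Derivative

/-- The dimensionless total force at angle `φ`, with contact angle `γ`. -/
noncomputable def totalForce (γ A C φ : ℝ) : ℝ :=
  -A * C ^ 2 - 2 * sin (φ + γ) - 4 * C * cos ((φ + γ) / 2) * sin φ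
    - (1 / 2) * C ^ 2 * sin (2 * φ) + C ^ 2 * φ

/-- The derivative of `totalForce γ A C`, with `1 - cos (2 * φ)` written as `2 * sin φ ^ 2`. -/
noncomputable def totalForceDeriv (γ C φ : ℝ) : ℝ :=
  2 * C ^ 2 * sin φ ^ 2 + 2 * C * sin ((φ + γ) / 2) * sin φ
    - 4 * C * cos ((φ + γ) / 2) * cos φ - 2 * cos (φ + γ)

/-- The second derivative of `totalForce γ A C`. -/
noncomputable def totalForceDeriv₂ (γ C φ : ℝ) : ℝ :=
  2 * sin (φ + γ) + 5 * C * (cos ((φ + γ) / 2) * sin φ)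
    + 4 * C * (sin ((φ + γ) / 2) * cos φ) + 4 * C ^ 2 * (sin φ * cos φ)

section TotalForce

variable {γ C φ : ℝ}

theorem hasDerivAt_totalForce (γ A C φ : ℝ) :
    HasDerivAt (totalForce γ A C) (totalForceDeriv γ C φ) φ := by
  have hadd : HasDerivAt (fun x => x + γ) 1 φ := (hasDerivAt_id φ).add_const γ
  have hdouble : HasDerivAt (fun x => 2 * x) (2 * 1) φ := (hasDerivAt_id φ).const_mul 2
  have h := (((hadd.sin.const_mul 2).const_sub (-A * C ^ 2)).sub
    (((hadd.div_const 2).cos.const_mul (4 * C)).mul (hasDerivAt_sin φ))).sub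
    (hdouble.sin.const_mul ((1 / 2) * C ^ 2)) |>.add ((hasDerivAt_id φ).const_mul (C ^ 2))
  refine h.congr_deriv ?_
  rw [totalForceDeriv, cos_two_mul, cos_sq']
  ring

theorem hasDerivAt_totalForceDeriv (γ C φ : ℝ) :
    HasDerivAt (totalForceDeriv γ C) (totalForceDeriv₂ γ C φ) φ := by
  have hadd : HasDerivAt (fun x => x + γ) 1 φ := (hasDerivAt_id φ).add_const γ
  have h := (((((hasDerivAt_sin φ).pow 2).const_mul (2 * C ^ 2)).add
    (((hadd.div_const 2).sin.const_mul (2 * C)).mul (hasDerivAt_sin φ))).sub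
    (((hadd.div_const 2).cos.const_mul (4 * C)).mul (hasDerivAt_cos φ))).sub
    (hadd.cos.const_mul 2)
  refine h.congr_deriv ?_
  rw [totalForceDeriv₂]
  push_cast
  ring

theorem totalForceDeriv₂_pos (hC : 0 ≤ C) (hγ : π / 2 ≤ γ) (hφ : φ ∈ Ioo 0 (π - γ)) :
    0 < totalForceDeriv₂ γ C φ := by
  obtain ⟨h0, h1⟩ := hφ
  have sin_pos : 0 < sin φ := sin_pos_of_pos_of_lt_pi h0 (by linarith)
  have cos_nonneg : 0 ≤ cos φ :=
    cos_nonneg_of_neg_pi_div_two_le_of_le (by linarith) (by linarith)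
  have sin_half_nonneg : 0 ≤ sin ((φ + γ) / 2) :=
    sin_nonneg_of_nonneg_of_le_pi (by linarith) (by linarith)
  have cos_half_nonneg : 0 ≤ cos ((φ + γ) / 2) :=
    cos_nonneg_of_neg_pi_div_two_le_of_le (by linarith) (by linarith)
  have sin_add_pos : 0 < sin (φ + γ) := sin_pos_of_pos_of_lt_pi (by linarith) (by linarith)
  rw [totalForceDeriv₂]
  positivity

theorem totalForceDeriv_pos (hC : 0 ≤ C) (hγ : γ ≤ π) (hφ : φ ∈ Ioo (π - γ) (π / 2)) :
    0 < totalForceDeriv γ C φ := by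
  obtain ⟨h0, h1⟩ := hφ
  have sin_nonneg : 0 ≤ sin φ := sin_nonneg_of_nonneg_of_le_pi (by linarith) (by linarith)
  have cos_nonneg : 0 ≤ cos φ :=
    cos_nonneg_of_neg_pi_div_two_le_of_le (by linarith) (by linarith)
  have sin_half_nonneg : 0 ≤ sin ((φ + γ) / 2) :=
    sin_nonneg_of_nonneg_of_le_pi (by linarith) (by linarith)
  have cos_half_nonpos : cos ((φ + γ) / 2) ≤ 0 :=
    cos_nonpos_of_pi_div_two_le_of_le (by linarith) (by linarith)
  have cos_add_neg : cos (φ + γ) < 0 :=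
    cos_neg_of_pi_div_two_lt_of_lt (by linarith) (by linarith)
  have sin_sq_term : 0 ≤ 2 * C ^ 2 * sin φ ^ 2 := by positivity
  have sin_half_term : 0 ≤ 2 * C * sin ((φ + γ) / 2) * sin φ := by positivity
  have cos_half_term : 4 * C * cos ((φ + γ) / 2) * cos φ ≤ 0 :=
    mul_nonpos_of_nonpos_of_nonneg
      (mul_nonpos_of_nonneg_of_nonpos (by positivity) cos_half_nonpos) cos_nonneg
  rw [totalForceDeriv]
  linarith

theorem totalForceDeriv₂_neg (hC : 0 ≤ C) (hγ : γ ∈ Icc (π / 2) π) (hφ : φ ∈ Ioo (π / 2) π) :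
    totalForceDeriv₂ γ C φ < 0 := by
  obtain ⟨hγ₀, hγ₁⟩ := hγ
  obtain ⟨h0, h1⟩ := hφ
  have sin_nonneg : 0 ≤ sin φ := sin_nonneg_of_nonneg_of_le_pi (by linarith) h1.le
  have cos_nonpos : cos φ ≤ 0 := cos_nonpos_of_pi_div_two_le_of_le h0.le (by linarith)
  have sin_half_nonneg : 0 ≤ sin ((φ + γ) / 2) :=
    sin_nonneg_of_nonneg_of_le_pi (by linarith) (by linarith)
  have cos_half_nonpos : cos ((φ + γ) / 2) ≤ 0 :=
    cos_nonpos_of_pi_div_two_le_of_le (by linarith) (by linarith)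
  have sin_add_neg : sin (φ + γ) < 0 := by
    rw [← sin_sub_two_pi]
    exact sin_neg_of_neg_of_neg_pi_lt (by linarith) (by linarith)
  have cos_half_term : 5 * C * (cos ((φ + γ) / 2) * sin φ) ≤ 0 :=
    mul_nonpos_of_nonneg_of_nonpos (by positivity)
      (mul_nonpos_of_nonpos_of_nonneg cos_half_nonpos sin_nonneg)
  have sin_half_term : 4 * C * (sin ((φ + γ) / 2) * cos φ) ≤ 0 :=
    mul_nonpos_of_nonneg_of_nonpos (by positivity)
      (mul_nonpos_of_nonneg_of_nonpos sin_half_nonneg cos_nonpos)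
  have sin_cos_term : 4 * C ^ 2 * (sin φ * cos φ) ≤ 0 :=
    mul_nonpos_of_nonneg_of_nonpos (by positivity)
      (mul_nonpos_of_nonneg_of_nonpos sin_nonneg cos_nonpos)
  rw [totalForceDeriv₂]
  linarith

theorem strictMonoOn_totalForceDeriv (hC : 0 ≤ C) (hγ : π / 2 ≤ γ) :
    StrictMonoOn (totalForceDeriv γ C) (Icc 0 (π - γ)) :=
  strictMonoOn_of_hasDerivWithinAt_pos (convex_Icc _ _)
    (HasDerivAt.continuousOn fun φ _ => hasDerivAt_totalForceDeriv γ C φ)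
    (fun φ _ => (hasDerivAt_totalForceDeriv γ C φ).hasDerivWithinAt)
    fun _ hφ => totalForceDeriv₂_pos hC hγ (interior_Icc.subset hφ)

theorem strictAntiOn_totalForceDeriv (hC : 0 ≤ C) (hγ : γ ∈ Icc (π / 2) π) :
    StrictAntiOn (totalForceDeriv γ C) (Icc (π / 2) π) :=
  strictAntiOn_of_hasDerivWithinAt_neg (convex_Icc _ _)
    (HasDerivAt.continuousOn fun φ _ => hasDerivAt_totalForceDeriv γ C φ)
    (fun φ _ => (hasDerivAt_totalForceDeriv γ C φ).hasDerivWithinAt)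
    fun _ hφ => totalForceDeriv₂_neg hC hγ (interior_Icc.subset hφ)

theorem totalForce_pi_sub_totalForce_zero (γ A C : ℝ) :
    totalForce γ A C π - totalForce γ A C 0 = 4 * sin γ + π * C ^ 2 := by
  simp only [totalForce, add_comm π γ, sin_add_pi, sin_pi, sin_two_pi, zero_add, mul_zero, sin_zero]
  ring

theorem totalForce_zero_lt_totalForce_pi (hC : C ≠ 0) (hγ : γ ∈ Icc 0 π) (A : ℝ) :
    totalForce γ A C 0 < totalForce γ A C π := by
  have sin_nonneg : 0 ≤ sin γ := sin_nonneg_of_mem_Icc hγ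
  rw [← sub_pos, totalForce_pi_sub_totalForce_zero]
  positivity

end TotalForce

theorem total_force_at_most_two_zeros_obtuse_general (γ A C : ℝ) (hγ : γ ∈ Icc (π / 2) π)
    (hC : 0 < C) : {φ ∈ Icc 0 π | totalForce γ A C φ = 0}.encard ≤ 2 :=
  encard_fiber_le_two_of_hasDerivAt (fun φ _ => hasDerivAt_totalForce γ A C φ)
    (strictMonoOn_totalForceDeriv hC.le hγ.1)
    (fun _ hφ => (totalForceDeriv_pos hC.le hγ.2 hφ).ne')
    (strictAntiOn_totalForceDeriv hC.le hγ)
    (totalForce_zero_lt_totalForce_pi hC.ne' (Icc_subset_Icc_left pi_div_two_pos.le hγ) A) 0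

/-- For any `γ ∈ (π/2, π]` and any `A, C > 0`, the dimensionless total force has at most two
zeros on `[0, π]`. -/
theorem total_force_at_most_two_zeros_obtuse (γ A C : ℝ)
    (hγ : γ ∈ Set.Ioc (Real.pi / 2) Real.pi) (hA : 0 < A) (hC : 0 < C)
    (F : ℝ → ℝ)
    (hF : F = fun φ => -A * C ^ 2 - 2 * Real.sin (φ + γ)
      - 4 * C * Real.cos ((φ + γ) / 2) * Real.sin φ
      - (1 / 2) * C ^ 2 * Real.sin (2 * φ) + C ^ 2 * φ) :
    Set.encard {φ ∈ Set.Icc (0 : ℝ) Real.pi | F φ = 0} ≤ 2 := by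
  subst hF
  exact total_force_at_most_two_zeros_obtuse_general γ A C (Set.Ioc_subset_Icc_self hγ) hC
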